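/- arXiv:2302.05590 — 4 statements merged into one kernel-verified Lean document; each statement's English description precedes it below -/
import Mathlib

section
/- For all prices s¹, s² with 0 ≤ s¹ and 0 ≤ s², the two-tier pricing mechanism is incentive compatible if and only if s¹ ≤ s². -/
/-- Allocation probability of the two-tier pricing mechanism with prices `s1 ≤? s2`,
on report `t`. -/
noncomputable def twoTierAlloc (s1 s2 t : ℝ) : ℝ :=
  if t / 2 < s1 then 0 else if t / 2 < s2 then 1 / 2 else 1

/-- Payment of the two-tier pricing mechanism on report `t`. -/
noncomputable def twoTierPay (s1 s2 t : ℝ) : ℝ :=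
  if t / 2 < s1 then 0 else if t / 2 < s2 then s1 else s1 + s2

/-- Expected utility of a risk-neutral buyer with value `v` reporting `t`. -/
noncomputable def twoTierUtility (s1 s2 v t : ℝ) : ℝ :=
  twoTierAlloc s1 s2 t * v - twoTierPay s1 s2 t

/-!
If `s1 ≤ s2`, the mechanism sells the two halves of the item separately, at posted prices `s1` and
`s2`, to a buyer who values each half at `v / 2`, and a posted price is truthful. If `s2 < s1`, the
half item is never sold, and the whole item costs `s1 + s2` but goes only to reports of at least
`2 * s1`, so a buyer with value strictly between these two amounts gains by reporting `2 * s1`.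
-/

/-- Utility of a buyer with value `x` who reports `r` to a seller posting the price `p`; a report
equal to the price buys. -/
def postedPriceUtility {α : Type*} [AddGroup α] [LinearOrder α] (p x r : α) : α :=
  if r < p then 0 else x - p

theorem postedPriceUtility_le_self {α : Type*} [AddGroup α] [LinearOrder α] [AddRightMono α]
    (p x r : α) : postedPriceUtility p x r ≤ postedPriceUtility p x x := by
  unfold postedPriceUtility
  split_ifs with _ hx hx
  · exact le_rfl
  · exact sub_nonneg.mpr (not_lt.mp hx)
  · exact sub_nonpos.mpr hx.le
  · exact le_rfl

section TwoTier

variable {s1 s2 : ℝ}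

theorem twoTierUtility_eq_add_postedPriceUtility (h : s1 ≤ s2) (v t : ℝ) :
    twoTierUtility s1 s2 v t =
      postedPriceUtility s1 (v / 2) (t / 2) + postedPriceUtility s2 (v / 2) (t / 2) := by
  unfold twoTierUtility twoTierAlloc twoTierPay postedPriceUtility
  split_ifs <;> linarith

theorem twoTierUtility_le_self (h : s1 ≤ s2) (v t : ℝ) :
    twoTierUtility s1 s2 v t ≤ twoTierUtility s1 s2 v v := by
  simp only [twoTierUtility_eq_add_postedPriceUtility h]
  exact add_le_add (postedPriceUtility_le_self ..) (postedPriceUtility_le_self ..)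

theorem twoTierUtility_eq_ite_of_le (h : s2 ≤ s1) (v t : ℝ) :
    twoTierUtility s1 s2 v t = if t < 2 * s1 then 0 else v - (s1 + s2) := by
  unfold twoTierUtility twoTierAlloc twoTierPay
  split_ifs <;> linarith

theorem twoTierUtility_self_lt {v t : ℝ} (hv : s1 + s2 < v) (hv' : v < 2 * s1)
    (ht : 2 * s1 ≤ t) : twoTierUtility s1 s2 v v < twoTierUtility s1 s2 v t := by
  have h : s2 ≤ s1 := by linarith
  rw [twoTierUtility_eq_ite_of_le h, twoTierUtility_eq_ite_of_le h, if_pos hv', if_neg ht.not_gt]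
  exact sub_pos.mpr hv

end TwoTier

/-- The two-tier pricing mechanism is incentive compatible iff `s1 ≤ s2`. -/
theorem twoTier_ic_iff (s1 s2 : ℝ) (hs1 : 0 ≤ s1) (hs2 : 0 ≤ s2) :
    (∀ v t : ℝ, 0 ≤ v → 0 ≤ t →
      twoTierUtility s1 s2 v t ≤ twoTierUtility s1 s2 v v) ↔ s1 ≤ s2 := by
  refine ⟨fun hIC => ?_, fun h v t _ _ => twoTierUtility_le_self h v t⟩
  by_contra! hlt
  obtain ⟨v, hv, hv'⟩ : ∃ v, s1 + s2 < v ∧ v < 2 * s1 := exists_between (by linarith)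
  have v_nonneg : 0 ≤ v := (add_nonneg hs1 hs2).trans hv.le
  have t_nonneg : 0 ≤ 2 * s1 := mul_nonneg zero_le_two hs1
  exact (hIC v (2 * s1) v_nonneg t_nonneg).not_gt (twoTierUtility_self_lt hv hv' le_rfl)
end

section
/- Suppose some valuation is not identically zero, i.e., t_{i₀}(y') > 0 for some player i₀ and some y' ∈ Y. Then for every weight vector w, letting y be the selected outcome and s¹,…,sⁿ the transfers of the weighted Groves mechanism, we have s^k − t_k(y) ≠ 0 for every player k, and w_i = (1/(s^i − t_i(y))) / (Σ_{k=1}^n 1/(s^k − t_k(y))) for every player i; in particular, the weight vector w is uniquely determined by the outcome (y; s¹,…,sⁿ) and the valuations. -/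
/-!
Write `W` for the weighted welfare at the selected outcome. The Groves transfers
align every player's net cost with the common objective: `s k - t k y = -W / w k`. Hence the
reciprocals `1 / (s k - t k y)` are proportional to the weights, and normalizing them to sum `1`
recovers `w`.
-/

open Finset

section Welfare

variable {ι K : Type*} [Fintype ι]

/-- The weighted welfare of an outcome which player `i` values at `v i`: the quantity maximized by
the weighted Groves mechanism. The outcome itself enters only through the values `v`. -/
def weightedWelfare [NonUnitalNonAssocSemiring K] (w v : ι → K) : K :=
  ∑ i, w i * v i

variable [Semiring K] [PartialOrder K] [IsStrictOrderedRing K] {w : ι → K}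

theorem weightedWelfare_pos {v : ι → K}
    (hw : ∀ i, 0 < w i) (hv : ∀ i, 0 ≤ v i) (hpos : ∃ i, 0 < v i) : 0 < weightedWelfare w v :=
  let ⟨i, hi⟩ := hpos
  sum_pos' (fun j _ ↦ mul_nonneg (hw j).le (hv j)) ⟨i, mem_univ i, mul_pos (hw i) hi⟩

theorem weightedWelfare_pos_of_forall_le {Y : Type*} {t : ι → Y → K} {y : Y} (hw : ∀ i, 0 < w i)
    (ht : ∀ i y', 0 ≤ t i y') (hne : ∃ i, ∃ y', 0 < t i y')
    (hy : ∀ y', weightedWelfare w (t · y') ≤ weightedWelfare w (t · y)) :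
    0 < weightedWelfare w (t · y) :=
  let ⟨i, y', hpos⟩ := hne
  (weightedWelfare_pos hw (ht · y') ⟨i, hpos⟩).trans_le (hy y')

end Welfare

section Transfer

variable {ι K : Type*} [Fintype ι] [DecidableEq ι] [Field K] {w v : ι → K} {i : ι}

/-- The transfer charged to player `i` by the weighted Groves mechanism when the selected outcome
is worth `v j` to each player `j`; a negative transfer is a payment to the player. -/
def grovesTransfer (w v : ι → K) (i : ι) : K :=
  -(1 / w i) * ∑ j ∈ univ.erase i, w j * v j

theorem grovesTransfer_sub (hwi : w i ≠ 0) :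
    grovesTransfer w v i - v i = -weightedWelfare w v / w i := by
  have hsplit : weightedWelfare w v = w i * v i + ∑ j ∈ univ.erase i, w j * v j :=
    (add_sum_erase univ (fun j ↦ w j * v j) (mem_univ i)).symm
  rw [hsplit, grovesTransfer]
  field_simp
  ring

theorem grovesTransfer_sub_ne_zero (hwi : w i ≠ 0) (hW : weightedWelfare w v ≠ 0) :
    grovesTransfer w v i - v i ≠ 0 := by
  rw [grovesTransfer_sub hwi]
  exact div_ne_zero (neg_ne_zero.mpr hW) hwi

theorem one_div_grovesTransfer_sub (hwi : w i ≠ 0) :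
    1 / (grovesTransfer w v i - v i) = w i / -weightedWelfare w v := by
  rw [grovesTransfer_sub hwi, one_div_div]

theorem sum_one_div_grovesTransfer_sub (hw : ∀ i, w i ≠ 0) :
    ∑ i, 1 / (grovesTransfer w v i - v i) = (∑ i, w i) / -weightedWelfare w v := by
  simp only [one_div_grovesTransfer_sub (hw _), sum_div]

theorem weightedGroves_weights_identifiable_general (hw : ∀ i, w i ≠ 0) (hwsum : ∑ i, w i = 1)
    (hW : weightedWelfare w v ≠ 0) :
    (∀ k, grovesTransfer w v k - v k ≠ 0) ∧
    (∀ i, w i = (1 / (grovesTransfer w v i - v i)) / ∑ k, 1 / (grovesTransfer w v k - v k)) := by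
  refine ⟨fun k ↦ grovesTransfer_sub_ne_zero (hw k) hW, fun i ↦ ?_⟩
  rw [one_div_grovesTransfer_sub (hw i), sum_one_div_grovesTransfer_sub hw,
    div_div_div_cancel_right₀ (neg_ne_zero.mpr hW), hwsum, div_one]

end Transfer

/-- Identifiability of the weights of the weighted Groves mechanism from a single
outcome: if some valuation is not identically zero, then for the welfare-maximizing
outcome `y` and the Groves transfers `s`, every `s k - t k y` is nonzero and each
weight `w i` equals `(1 / (s i - t i y)) / ∑ k, 1 / (s k - t k y)`; in particular
the weight vector is uniquely determined by the outcome and the valuations. -/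
theorem weightedGroves_weights_identifiable
    {n : ℕ} (hn : 1 ≤ n) {Y : Type} [Fintype Y] [Nonempty Y]
    (t : Fin n → Y → ℝ) (ht : ∀ i y, 0 ≤ t i y)
    (hne : ∃ i₀ : Fin n, ∃ y' : Y, 0 < t i₀ y')
    (w : Fin n → ℝ) (hw : ∀ i, 0 < w i) (hwsum : ∑ i, w i = 1)
    (y : Y) (hy : ∀ y' : Y, ∑ i, w i * t i y' ≤ ∑ i, w i * t i y)
    (s : Fin n → ℝ)
    (hs : ∀ i, s i = -(1 / w i) * ∑ j ∈ Finset.univ.erase i, w j * t j y) :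
    (∀ k, s k - t k y ≠ 0) ∧
    (∀ i, w i = (1 / (s i - t i y)) / ∑ k, 1 / (s k - t k y)) := by
  obtain rfl : s = grovesTransfer w (t · y) := funext hs
  exact weightedGroves_weights_identifiable_general (fun i ↦ (hw i).ne') hwsum
    (weightedWelfare_pos_of_forall_le hw ht hne hy).ne'
end

section
/- (Knowledge extraction for the Schnorr protocol.) Let G be a finite group of prime order p, let g, a, α ∈ G, and let β, β', γ, γ' ∈ ZMod p with β ≠ β'. If g^γ = α·a^β and g^(γ') = α·a^(β'), then a = g^((γ − γ')·(β − β')⁻¹). -/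
/-!
Exponents may be computed in `ZMod n` because `g ^ n = a ^ n = 1`. The first transcript then reads
`g ^ γ' * g ^ (γ - γ') = (α * a ^ β') * a ^ (β - β')`, whose left factors agree by the second
transcript and cancel, a power of `g` being invertible. From `g ^ (γ - γ') = a ^ (β - β')` one
recovers `a` by inverting the exponent `β - β'`.
-/

section PowZModVal

variable {M : Type*} [Monoid M] {n : ℕ} {u g a : M}

theorem pow_zmod_val_one (hu : u ^ n = 1) : u ^ (1 : ZMod n).val = u := by
  rw [ZMod.val_one_eq_one_mod, ← pow_eq_pow_mod 1 hu, pow_one]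

theorem pow_zmod_val_mul (hu : u ^ n = 1) (x y : ZMod n) :
    u ^ (x * y).val = (u ^ x.val) ^ y.val := by
  rw [ZMod.val_mul, ← pow_eq_pow_mod _ hu, pow_mul]

theorem pow_zmod_val_add [NeZero n] (hu : u ^ n = 1) (x y : ZMod n) :
    u ^ (x + y).val = u ^ x.val * u ^ y.val := by
  rw [ZMod.val_add, ← pow_eq_pow_mod _ hu, pow_add]

theorem eq_pow_zmod_val_mul_inv_of_pow_eq_pow (hg : g ^ n = 1) (ha : a ^ n = 1)
    {x y : ZMod n} (hy : IsUnit y) (h : g ^ x.val = a ^ y.val) :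
    a = g ^ (x * y⁻¹).val :=
  calc
    a = a ^ (y * y⁻¹).val := by rw [ZMod.mul_inv_of_unit y hy, pow_zmod_val_one ha]
    _ = (a ^ y.val) ^ y⁻¹.val := pow_zmod_val_mul ha y y⁻¹
    _ = (g ^ x.val) ^ y⁻¹.val := by rw [h]
    _ = g ^ (x * y⁻¹).val := (pow_zmod_val_mul hg x y⁻¹).symm

theorem pow_zmod_val_sub_eq_pow_zmod_val_sub [NeZero n] (hg : g ^ n = 1) (ha : a ^ n = 1)
    {α : M} {β β' γ γ' : ZMod n}
    (h : g ^ γ.val = α * a ^ β.val) (h' : g ^ γ'.val = α * a ^ β'.val) :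
    g ^ (γ - γ').val = a ^ (β - β').val := by
  have g_pow_isUnit : IsUnit (g ^ γ'.val) := (IsUnit.of_pow_eq_one hg (NeZero.ne n)).pow _
  refine g_pow_isUnit.mul_left_cancel ?_
  calc
    g ^ γ'.val * g ^ (γ - γ').val = g ^ γ.val := by
      rw [← pow_zmod_val_add hg, add_sub_cancel]
    _ = α * a ^ β.val := h
    _ = α * (a ^ β'.val * a ^ (β - β').val) := by
      rw [← pow_zmod_val_add ha, add_sub_cancel]
    _ = g ^ γ'.val * a ^ (β - β').val := by rw [h', mul_assoc]

end PowZModVal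

theorem schnorr_knowledge_extraction_general
    {M : Type*} [Monoid M] {n : ℕ} [NeZero n] {g a α : M} (hg : g ^ n = 1) (ha : a ^ n = 1)
    {β β' γ γ' : ZMod n} (hβ : IsUnit (β - β'))
    (h : g ^ γ.val = α * a ^ β.val) (h' : g ^ γ'.val = α * a ^ β'.val) :
    a = g ^ ((γ - γ') * (β - β')⁻¹).val :=
  eq_pow_zmod_val_mul_inv_of_pow_eq_pow hg ha hβ
    (pow_zmod_val_sub_eq_pow_zmod_val_sub hg ha h h')

/-- Knowledge extraction for the Schnorr protocol: from two accepting transcripts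
`(α, β, γ)` and `(α, β', γ')` with the same first message and distinct challenges
`β ≠ β'`, the discrete logarithm of `a` base `g` can be computed:
`a = g ^ ((γ - γ') * (β - β')⁻¹).val`. -/
theorem schnorr_knowledge_extraction
    {G : Type} [Group G] [Fintype G] (p : ℕ) [Fact p.Prime]
    (hG : Fintype.card G = p) (g a α : G)
    (β β' γ γ' : ZMod p) (hββ' : β ≠ β')
    (h1 : g ^ γ.val = α * a ^ β.val)
    (h2 : g ^ γ'.val = α * a ^ β'.val) :
    a = g ^ ((γ - γ') * (β - β')⁻¹).val := by
  have pow_p (u : G) : u ^ p = 1 := hG ▸ pow_card_eq_one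
  exact schnorr_knowledge_extraction_general (pow_p g) (pow_p a) (sub_ne_zero.mpr hββ').isUnit h1 h2
end

section
/- (Perfect hiding of the bit commitment.) Let G be a finite group of prime order p and let f ∈ G with f ≠ 1. Then the pushforward under r ↦ f^r of the uniform distribution on ZMod p is the uniform distribution on G: PMF.map (fun r => f^r) (PMF.uniformOfFintype (ZMod p)) = PMF.uniformOfFintype G. In particular, the distribution of a commitment f^r with uniformly random r is the same for every non-identity base f, so the commitment reveals nothing about the committed bit. -/
open Function

section Uniform

variable {α β : Type*} {e : α → β}

theorem pmf_map_apply_of_injective (he : Injective e) (μ : PMF α) (a : α) :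
    μ.map e (e a) = μ a := by
  classical
  rw [PMF.map_apply]
  simp only [he.eq_iff, tsum_ite_eq']

theorem map_uniformOfFintype_of_bijective [Fintype α] [Nonempty α] [Fintype β] [Nonempty β]
    (he : Bijective e) :
    (PMF.uniformOfFintype α).map e = PMF.uniformOfFintype β := by
  ext b
  obtain ⟨a, rfl⟩ := he.surjective b
  rw [pmf_map_apply_of_injective he.injective, PMF.uniformOfFintype_apply,
    PMF.uniformOfFintype_apply, Fintype.card_of_bijective he]

end Uniform

theorem pow_zmod_val_injective {M : Type*} [Monoid M] {n : ℕ} [NeZero n] {f : M}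
    (hf : orderOf f = n) : Injective fun r : ZMod n => f ^ r.val := by
  intro r s hrs
  have val_lt_orderOf (t : ZMod n) : t.val < orderOf f := hf ▸ t.val_lt
  exact ZMod.val_injective n (pow_injOn_Iio_orderOf (val_lt_orderOf r) (val_lt_orderOf s) hrs)

theorem pow_zmod_val_bijective {G : Type*} [Group G] {n : ℕ} [NeZero n]
    (hG : Nat.card G = n) {f : G} (hf : Subgroup.zpowers f = ⊤) :
    Bijective fun r : ZMod n => f ^ r.val := by
  have hord : orderOf f = n := (orderOf_eq_card_of_zpowers_eq_top hf).trans hG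
  have : Finite G := Nat.finite_of_card_ne_zero (hG ▸ NeZero.ne n)
  exact (Nat.bijective_iff_injective_and_card _).2
    ⟨pow_zmod_val_injective hord, by rw [Nat.card_zmod, hG]⟩

theorem commitment_perfect_hiding_general {G : Type*} [Group G] [Fintype G] (n : ℕ) [NeZero n]
    (hG : Fintype.card G = n) (f : G) (hf : Subgroup.zpowers f = ⊤) :
    PMF.map (fun r : ZMod n => f ^ r.val) (PMF.uniformOfFintype (ZMod n))
      = PMF.uniformOfFintype G :=
  map_uniformOfFintype_of_bijective (pow_zmod_val_bijective (Nat.card_eq_fintype_card.trans hG) hf)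

/-- Perfect hiding of the bit commitment: in a group `G` of prime order `p`, for any
non-identity base `f`, the pushforward under `r ↦ f ^ r` of the uniform distribution
on `ZMod p` is the uniform distribution on `G`; in particular the distribution of a
commitment `f ^ r` with uniformly random `r` is the same for every non-identity
base `f`, so the commitment reveals nothing about the committed bit. -/
theorem commitment_perfect_hiding
    {G : Type} [Group G] [Fintype G] (p : ℕ) [Fact p.Prime]
    (hG : Fintype.card G = p) (f : G) (hf : f ≠ 1) :
    PMF.map (fun r : ZMod p => f ^ r.val) (PMF.uniformOfFintype (ZMod p))
      = PMF.uniformOfFintype G :=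
  commitment_perfect_hiding_general p hG f
    (zpowers_eq_top_of_prime_card (Nat.card_eq_fintype_card.trans hG) hf)
end
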